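/- arXiv:2202.01278 — 3 statements merged into one kernel-verified Lean document; each statement's English description precedes it below -/
import Mathlib

section
/- Let m ∈ ℕ and let α, β ∈ ℝ satisfy β > 0, α+1−m > 0, and α+1−m−β ∉ {0,1,…,m−1}, and let n ≥ m; write δ = α+1. Let w_1,…,w_m ∈ ℂ list the roots of P_m^{(−α−1,β−1)} with multiplicity (so P_m^{(−α−1,β−1)}(X) = c·∏_{j=1}^m (X−w_j) with c its leading coefficient), and let v_1,…,v_{n−m} ∈ ℂ list the roots of P_{n−m}^{(α+1,β−1)} with multiplicity similarly. Set W_j = w_j for 1 ≤ j ≤ m and W_{m+j} = v_j for 1 ≤ j ≤ n−m. For x ∈ ℂ let M(x) be the (n+1)×(n+1) matrix whose j-th row, for 1 ≤ j ≤ n, is (1, W_j, W_j², …, W_j^n), and whose last row has k-th entry (−1)^k·k!·R_k(x;β)/β^{(k+1)} for k = 0,1,…,n. Then for every x ∈ ℂ, n!·(δ+n−m)·(∏_{1≤i<j≤n}(W_j−W_i))·P^{(α,β)}_{m,n}(x) = (−1)^m·2^{−n}·C(n,m)·(n+δ−2m)·(n+β)·[(β−δ+m)(β−δ+m+1)⋯(β−δ+2m−1)]·[(δ+β+n−m)(δ+β+n−m+1)⋯(δ+β+2(n−m)−1)]·det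 M(x), where the two bracketed products equal Γ(β−δ+2m)/Γ(β−δ+m) and Γ(δ+β+2(n−m))/Γ(δ+β+n−m) respectively; moreover the points W_1,…,W_n are pairwise distinct, so the Vandermonde factor is nonzero. -/
open Finset

/-- Jacobi polynomial `P_n^{(α,β)}(x)` evaluated at complex `x`, with the
convention `P_n^{(α,β)} = 0` for negative integer index `n`. -/
noncomputable def jacobiC (α β : ℝ) (n : ℤ) (x : ℂ) : ℂ :=
  if 0 ≤ n then
    (Nat.factorial n.toNat : ℂ)⁻¹ *
      ∑ k ∈ Finset.range (n.toNat + 1),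
        (n.toNat.choose k : ℂ) *
          (∏ i ∈ Finset.Ico k n.toNat, ((α : ℂ) + i + 1)) *
          (∏ i ∈ Finset.range k, ((α : ℂ) + β + ((n : ℤ) : ℂ) + 1 + i)) *
          ((x - 1) / 2) ^ k
  else 0

/-- Exceptional `X_m`-Jacobi polynomial (complex variable). -/
noncomputable def XJacC (m : ℕ) (α β : ℝ) (n : ℕ) (x : ℂ) : ℂ :=
  ((-1 : ℂ) ^ m / ((α : ℂ) + 1 + n - m)) *
    ((x - 1) * (1 + (α : ℂ) + β + n - m) / 2 *
        jacobiC (-α - 1) (β - 1) (m : ℤ) x * jacobiC (α + 2) β ((n : ℤ) - m - 1) x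
      + ((α : ℂ) + 1 - m) * jacobiC (-α - 2) β (m : ℤ) x * jacobiC (α + 1) (β - 1) ((n : ℤ) - m) x)

/-- Pochhammer symbol `a^{(j)} = a(a+1)⋯(a+j-1)`. -/
noncomputable def poch (a : ℂ) (j : ℕ) : ℂ :=
  ∏ i ∈ Finset.range j, (a + i)

/-- Partial sums `R_k(x;β) = ∑_{j=0}^k β^{(j)}(−x)^j/j!`. -/
noncomputable def Rpartial (k : ℕ) (x : ℂ) (β : ℝ) : ℂ :=
  ∑ j ∈ Finset.range (k + 1), poch (β : ℂ) j * (-x) ^ j / (Nat.factorial j)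

/-!
Put `x = 1 + 2t`, `δ = α + 1`, `N = n - m`, and let `A`, `B` be `P_m^{(-δ,β-1)}`, `P_N^{(δ,β-1)}` as
polynomials in `t`. Contiguity and derivative rules turn the exceptional polynomial into a multiple
of `E = t (A B' - A' B) + δ A B`. Subtracting the two Jacobi equations gives the first order
equation `(1 + t) E' + β E = (δ + N - m)(n + β) A B`, whose shape survives the change to `x`. The
operator `(1 + x) d/dx + β` has a unique polynomial inverse, and evaluating that inverse at `x` is
the functional whose moments form the last row of `M(x)`. Since `A B` is a multiple of
`∏ (X - W j)`, and the bordered Vandermonde determinant is the Vandermonde determinant times this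
functional applied to `∏ (X - W j)`, the identity reduces to comparing leading coefficients.

Distinctness of the nodes: neither polynomial vanishes at the endpoints, so by the Jacobi equation
its roots are simple. The roots of `B` lie in the orthogonality interval (in Stieltjes' picture, the
forces at an extreme root outside it cannot balance), while all terms of `A` in the Bernstein basis
of that interval have the same sign there, so `A` has no root in it.
-/

section Polynomials

open Polynomial

section ODE

variable {K : Type*} [CommRing K] [IsDomain K] [CharZero K]

theorem eval_derivative_ne_zero_of_linear_ode {p q r P : K[X]} {z : K}
    (hode : p * derivative (derivative P) + q * derivative P + r * P = 0)
    (hP : P ≠ 0) (hp : p.eval z ≠ 0) (hz : P.IsRoot z) : (derivative P).eval z ≠ 0 := by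
  intro hz'
  obtain ⟨k, hk⟩ : ∃ k, P.rootMultiplicity z = k + 2 :=
    Nat.exists_eq_add_of_le' ((one_lt_rootMultiplicity_iff_isRoot hP).2 ⟨hz, hz'⟩)
  obtain ⟨R, hPR, hR⟩ := exists_eq_pow_rootMultiplicity_mul_and_not_dvd P hP z
  rw [dvd_iff_isRoot] at hR
  rw [hk] at hPR
  set S := C ((k : K) + 2) * R + (X - C z) * derivative R with hS
  set T := C ((k : K) + 1) * S + (X - C z) * derivative S with hT
  have hP' : derivative P = (X - C z) ^ (k + 1) * S := by
    rw [hPR, derivative_mul, derivative_X_sub_C_pow, hS]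
    push_cast
    simp only [map_add, map_natCast, map_ofNat]
    ring
  have hP'' : derivative (derivative P) = (X - C z) ^ k * T := by
    rw [hP', derivative_mul, derivative_X_sub_C_pow, hT]
    push_cast
    simp only [map_add, map_natCast, map_one]
    ring
  have hcancel : p * T + q * ((X - C z) * S) + r * ((X - C z) ^ 2 * R) = 0 := by
    apply mul_left_cancel₀ (pow_ne_zero k (X_sub_C_ne_zero z))
    rw [hP'', hP', hPR] at hode
    linear_combination hode
  have hTz : T.eval z = (k + 1) * ((k + 2) * R.eval z) := by simp [hT, hS]
  have hpT : p.eval z * T.eval z = 0 := by simpa using congrArg (eval z) hcancel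
  rw [hTz] at hpT
  have hk1 : (k : K) + 1 ≠ 0 := by exact_mod_cast k.succ_ne_zero
  have hk2 : (k : K) + 2 ≠ 0 := by exact_mod_cast (k + 1).succ_ne_zero
  exact mul_ne_zero hp (mul_ne_zero hk1 (mul_ne_zero hk2 hR)) hpT

end ODE

theorem injective_of_eval_derivative_ne_zero {R ι : Type*} [CommRing R] [Fintype ι]
    {P : R[X]} {c : R} {u : ι → R} (hP : P = C c * ∏ j, (X - C (u j)))
    (h : ∀ i, (derivative P).eval (u i) ≠ 0) : Function.Injective u := by
  classical
  intro i j hij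
  by_contra hne
  apply h i
  rw [hP, ← mul_prod_erase univ _ (mem_univ i),
    ← mul_prod_erase (univ.erase i) _ (mem_erase.2 ⟨Ne.symm hne, mem_univ j⟩), ← hij]
  simp [derivative_mul]

theorem eval_derivative_derivative_of_splits {K : Type*} [Field K] {P : K[X]} {z : K}
    (hs : P.Splits) (hz : P.IsRoot z) (hz' : (derivative P).eval z ≠ 0) :
    (derivative (derivative P)).eval z =
      2 * (derivative P).eval z *
        ((P /ₘ (X - C z)).roots.map fun r => 1 / (z - r)).sum := by
  set R := P /ₘ (X - C z)
  have hPR : P = (X - C z) * R := (mul_divByMonic_eq_iff_isRoot.2 hz).symm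
  have hP0 : P ≠ 0 := by
    intro h
    simp [h] at hz'
  have hRs : R.Splits := hs.of_dvd hP0 ⟨X - C z, by rw [mul_comm]; exact hPR⟩
  have hP' : (derivative P).eval z = R.eval z := by simp [hPR]
  have hP'' : (derivative (derivative P)).eval z = 2 * (derivative R).eval z := by
    simp [hPR, two_mul]
  rw [hP'', hP', hRs.eval_derivative_eq_eval_mul_sum (hP' ▸ hz'), mul_assoc]

section Electrostatics

variable {P : ℂ[X]} {a b : ℝ} {l : ℂ}

-- Stieltjes' equilibrium condition: the other roots repel `z` with force `2 / (z - r)`, and fixed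
-- charges `a` at `0` and `b` at `-1` repel it as well.
theorem sum_inv_sub_roots_add_eq_zero {z : ℂ}
    (hode : X * (X + 1) * derivative (derivative P) + (C (a : ℂ) + C ((a : ℂ) + b) * X) *
      derivative P = C l * P)
    (hz : P.IsRoot z) (hz' : (derivative P).eval z ≠ 0) (h0 : z ≠ 0) (h1 : z + 1 ≠ 0) :
    2 * ((P /ₘ (X - C z)).roots.map fun r => 1 / (z - r)).sum + a / z + b / (z + 1) = 0 := by
  have hev := congrArg (eval z) hode
  simp only [eval_add, eval_mul, eval_X, eval_one, eval_C, hz.eq_zero, mul_zero,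
    eval_derivative_derivative_of_splits (IsAlgClosed.splits P) hz hz'] at hev
  field_simp
  apply mul_left_cancel₀ hz'
  linear_combination hev

theorem re_inv_nonneg {u : ℂ} (hu : 0 ≤ u.re) : 0 ≤ (u⁻¹).re := by
  rw [Complex.inv_re]
  exact div_nonneg hu (Complex.normSq_nonneg u)

theorem re_inv_pos {u : ℂ} (hu : 0 < u.re) : 0 < (u⁻¹).re := by
  rw [Complex.inv_re]
  exact div_pos hu (Complex.normSq_pos.2 fun h => by simp [h] at hu)

theorem sum_inv_add_ne_zero_of_re_pos {s : Multiset ℂ} {w z : ℂ} (ha : 0 < a) (hb : 0 < b)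
    (hs : ∀ r ∈ s, (w * r).re ≤ (w * z).re) (h0 : 0 < (w * z).re) (h1 : 0 < (w * (z + 1)).re) :
    2 * (s.map fun r => 1 / (z - r)).sum + a / z + b / (z + 1) ≠ 0 := by
  intro h
  have hsum : 0 ≤ (s.map fun r => (w * (z - r))⁻¹).sum.re := by
    rw [← Complex.coe_reAddGroupHom, map_multiset_sum, Multiset.map_map]
    refine Multiset.sum_nonneg fun x hx => ?_
    obtain ⟨r, hr, rfl⟩ := Multiset.mem_map.1 hx
    refine re_inv_nonneg ?_
    rw [mul_sub, Complex.sub_re, sub_nonneg]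
    exact hs r hr
  have hw : 2 * (s.map fun r => (w * (z - r))⁻¹).sum + a * (w * z)⁻¹ + b * (w * (z + 1))⁻¹ = 0 := by
    simp only [mul_inv, Multiset.sum_map_mul_left]
    simp only [div_eq_mul_inv, one_mul] at h
    linear_combination w⁻¹ * h
  have hre := congrArg Complex.re hw
  rw [Complex.add_re, Complex.add_re, Complex.re_ofReal_mul, Complex.re_ofReal_mul,
    ← Complex.ofReal_ofNat, Complex.re_ofReal_mul, Complex.zero_re] at hre
  have hz := mul_pos ha (re_inv_pos h0)
  have hz1 := mul_pos hb (re_inv_pos h1)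
  linarith

-- At a root where `r ↦ (w * r).re` is maximal, all forces from the other roots and from the charges
-- at `0` and `-1` push in the same direction, so they cannot sum to zero.
theorem re_mul_le_max_of_isRoot (ha : 0 < a) (hb : 0 < b)
    (hode : X * (X + 1) * derivative (derivative P) + (C (a : ℂ) + C ((a : ℂ) + b) * X) *
      derivative P = C l * P)
    (hP0 : P.eval 0 ≠ 0) (hP1 : P.eval (-1) ≠ 0) {z : ℂ} (hz : P.IsRoot z) (w : ℂ) :
    (w * z).re ≤ max 0 (-w.re) := by
  have hP : P ≠ 0 := by
    rintro rfl
    simp at hP0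
  obtain ⟨u, hu, hmax⟩ := P.roots.toFinset.exists_max_image (fun r => (w * r).re)
    ⟨z, by simpa [hP] using hz⟩
  simp only [Multiset.mem_toFinset, mem_roots hP] at hu hmax
  by_contra! hcon
  obtain ⟨hpos, hpos'⟩ := max_lt_iff.1 (hcon.trans_le (hmax z hz))
  have hu0 : u ≠ 0 := by
    rintro rfl
    exact hP0 hu
  have hu1 : u + 1 ≠ 0 := by
    intro h
    rw [eq_neg_of_add_eq_zero_left h] at hu
    exact hP1 hu
  have hode' : X * (X + 1) * derivative (derivative P) +
      (C (a : ℂ) + C ((a : ℂ) + b) * X) * derivative P + -C l * P = 0 := by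
    linear_combination hode
  have hu' : (derivative P).eval u ≠ 0 :=
    eval_derivative_ne_zero_of_linear_ode hode' hP (by simpa using ⟨hu0, hu1⟩) hu
  refine sum_inv_add_ne_zero_of_re_pos ha hb (fun r hr => hmax r ?_) hpos ?_
    (sum_inv_sub_roots_add_eq_zero hode hu hu' hu0 hu1)
  · exact (isRoot_of_mem_roots hr).dvd ⟨X - C u, by
      rw [mul_comm, mul_divByMonic_eq_iff_isRoot.2 hu]⟩
  · rw [mul_add, mul_one, Complex.add_re]
    linarith

theorem exists_mem_Icc_eq_ofReal_of_isRoot (ha : 0 < a) (hb : 0 < b)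
    (hode : X * (X + 1) * derivative (derivative P) + (C (a : ℂ) + C ((a : ℂ) + b) * X) *
      derivative P = C l * P)
    (hP0 : P.eval 0 ≠ 0) (hP1 : P.eval (-1) ≠ 0) {z : ℂ} (hz : P.IsRoot z) :
    ∃ t ∈ Set.Icc (-1 : ℝ) 0, z = t := by
  have hbound := re_mul_le_max_of_isRoot ha hb hode hP0 hP1 hz
  have hre_le : z.re ≤ 0 := by simpa using hbound 1
  have hle_re : -1 ≤ z.re := by simpa [neg_le] using hbound (-1)
  have him_nonneg : 0 ≤ z.im := by simpa using hbound Complex.I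
  have him_nonpos : z.im ≤ 0 := by simpa using hbound (-Complex.I)
  exact ⟨z.re, ⟨hle_re, hre_le⟩, Complex.ext rfl (le_antisymm him_nonpos him_nonneg)⟩

end Electrostatics

theorem eq_of_derivative_eq_of_eval_zero_eq {R : Type*} [CommRing R]
    [IsAddTorsionFree R] {P Q : R[X]} (hd : derivative P = derivative Q)
    (h0 : P.eval 0 = Q.eval 0) : P = Q := by
  have hconst := eq_C_of_derivative_eq_zero (p := P - Q) (by rw [derivative_sub, hd, sub_self])
  rw [coeff_zero_eq_eval_zero, eval_sub, h0, sub_self, C_0] at hconst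
  exact sub_eq_zero.1 hconst

theorem derivative_sum_antidiagonal_succ {R : Type*} [CommSemiring R] (q : ℕ → ℕ → R) (N : ℕ) :
    derivative (∑ p ∈ antidiagonal (N + 1), C (q p.1 p.2) * X ^ p.1 * (X + 1) ^ p.2) =
      ∑ p ∈ antidiagonal N, C ((p.1 + 1) * q (p.1 + 1) p.2 + (p.2 + 1) * q p.1 (p.2 + 1)) *
        X ^ p.1 * (X + 1) ^ p.2 := by
  have hl : ∑ p ∈ antidiagonal (N + 1), C (q p.1 p.2) * derivative (X ^ p.1) * (X + 1) ^ p.2 =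
      ∑ p ∈ antidiagonal N, C ((p.1 + 1) * q (p.1 + 1) p.2) * X ^ p.1 * (X + 1) ^ p.2 := by
    rw [Nat.sum_antidiagonal_succ, pow_zero, derivative_one, mul_zero, zero_mul, zero_add]
    refine sum_congr rfl fun p _ => ?_
    simp only [derivative_X_pow_succ, map_add, map_natCast, map_one, map_mul]
    ring
  have hr : ∑ p ∈ antidiagonal (N + 1), C (q p.1 p.2) * X ^ p.1 * derivative ((X + 1) ^ p.2) =
      ∑ p ∈ antidiagonal N, C ((p.2 + 1) * q p.1 (p.2 + 1)) * X ^ p.1 * (X + 1) ^ p.2 := by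
    rw [Nat.sum_antidiagonal_succ', pow_zero, derivative_one, mul_zero, zero_add]
    refine sum_congr rfl fun p _ => ?_
    simp only [derivative_pow, Nat.cast_add, Nat.cast_one, map_add, map_natCast, map_one,
      add_tsub_cancel_right, derivative_X, derivative_one, add_zero, mul_one, map_mul]
    ring
  simp only [derivative_sum, derivative_mul, derivative_C, zero_mul, zero_add, sum_add_distrib,
    hl, hr, C_add, add_mul]

section Jacobi

variable {K : Type*} [Field K] (a b : K) (N k : ℕ)

/-- The coefficient of `t ^ k` in the Jacobi polynomial `P_N^{(a,b)}(1 + 2t)`. -/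
def jacobiCoeff : K :=
  (N.factorial : K)⁻¹ * ((N.choose k : K) * (∏ i ∈ Ico k N, (a + i + 1)) *
    ∏ i ∈ range k, (a + b + N + 1 + i))

/-- The Jacobi polynomial `P_N^{(a,b)}(1 + 2t)` as a polynomial in `t`, so that the endpoints `1`
and `-1` of the classical interval become `0` and `-1`. -/
noncomputable def jacobiPoly : K[X] :=
  ∑ k ∈ range (N + 1), C (jacobiCoeff a b N k) * X ^ k

variable {N k} in
theorem jacobiCoeff_eq_zero_of_lt (h : N < k) : jacobiCoeff a b N k = 0 := by
  simp [jacobiCoeff, Nat.choose_eq_zero_of_lt h]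

theorem coeff_jacobiPoly : (jacobiPoly a b N).coeff k = jacobiCoeff a b N k := by
  simp only [jacobiPoly, finsetSum_coeff, coeff_C_mul, coeff_X_pow, mul_ite, mul_one, mul_zero,
    sum_ite_eq, mem_range]
  exact ite_eq_left_iff.2 fun h => (jacobiCoeff_eq_zero_of_lt a b (by omega)).symm

theorem natDegree_jacobiPoly_le : (jacobiPoly a b N).natDegree ≤ N :=
  natDegree_le_iff_coeff_eq_zero.2 fun k hk => by
    rw [coeff_jacobiPoly, jacobiCoeff_eq_zero_of_lt a b hk]

theorem jacobiPoly_zero : jacobiPoly a b 0 = 1 := by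
  simp [jacobiPoly, jacobiCoeff]

theorem eval_zero_jacobiPoly :
    (jacobiPoly a b N).eval 0 = (N.factorial : K)⁻¹ * ∏ i ∈ range N, (a + i + 1) := by
  simp [← coeff_zero_eq_eval_zero, coeff_jacobiPoly, jacobiCoeff]

theorem jacobiCoeff_succ_right :
    ((k : K) + 1) * (k + a + 1) * jacobiCoeff a b N (k + 1) =
      ((N : K) - k) * (N + k + a + b + 1) * jacobiCoeff a b N k := by
  rcases lt_trichotomy k N with h | rfl | h
  · have hchoose : (N.choose (k + 1) : K) * (k + 1) = N.choose k * ((N : K) - k) := by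
      rw [← Nat.cast_sub h.le]
      exact_mod_cast congrArg (Nat.cast : ℕ → K) <| Nat.choose_succ_right_eq N k
    rw [jacobiCoeff, jacobiCoeff, prod_range_succ, prod_eq_prod_Ico_succ_bot h]
    linear_combination ((N.factorial : K)⁻¹ * (k + a + 1) * (∏ i ∈ Ico (k + 1) N, (a + i + 1)) *
      (∏ i ∈ range k, (a + b + N + 1 + i)) * (a + b + N + 1 + k)) * hchoose
  · simp [jacobiCoeff_eq_zero_of_lt a b k.lt_succ_self]
  · simp [jacobiCoeff_eq_zero_of_lt a b h, jacobiCoeff_eq_zero_of_lt a b (h.trans k.lt_succ_self)]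

theorem jacobiPoly_ode :
    X * (X + 1) * derivative (derivative (jacobiPoly a b N)) +
      (C (a + 1) + C (a + b + 2) * X) * derivative (jacobiPoly a b N) =
      C ((N : K) * (N + a + b + 1)) * jacobiPoly a b N := by
  suffices X * (X * derivative (derivative (jacobiPoly a b N))) +
      X * derivative (derivative (jacobiPoly a b N)) + C (a + 1) * derivative (jacobiPoly a b N) +
      C (a + b + 2) * (X * derivative (jacobiPoly a b N)) =
      C ((N : K) * (N + a + b + 1)) * jacobiPoly a b N by
    rw [← this]
    ring
  ext k
  have hrec := jacobiCoeff_succ_right a b N k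
  rcases k with _ | _ | k <;>
  · simp only [coeff_add, coeff_C_mul, coeff_X_mul, coeff_X_mul_zero, coeff_derivative,
      coeff_jacobiPoly, Nat.cast_add, Nat.cast_one, Nat.cast_zero, zero_add] at hrec ⊢
    linear_combination hrec

theorem jacobiCoeff_contiguous :
    ((k : K) + a) * jacobiCoeff a b N k = (N + a) * jacobiCoeff (a - 1) (b + 1) N k := by
  rcases le_or_gt k N with h | h
  · have hprod : (k + a) * ∏ i ∈ Ico k N, (a + i + 1) = (N + a) * ∏ i ∈ Ico k N, (a + (i : K)) := by
      have hbot := prod_eq_prod_Ico_succ_bot (Nat.lt_succ_of_le h) fun i : ℕ => a + (i : K)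
      rw [Nat.succ_eq_add_one, prod_Ico_succ_top h, ← prod_Ico_add'] at hbot
      simp only [Nat.cast_add, Nat.cast_one, ← add_assoc] at hbot
      linear_combination -hbot
    rw [jacobiCoeff, jacobiCoeff, sub_add_add_cancel]
    simp only [sub_add_eq_add_sub _ (1 : K), add_sub_cancel_right]
    linear_combination ((N.factorial : K)⁻¹ * (N.choose k : K) *
      (∏ i ∈ range k, (a + b + N + 1 + i))) * hprod
  · simp [jacobiCoeff_eq_zero_of_lt _ _ h]

theorem X_mul_derivative_jacobiPoly_add :
    X * derivative (jacobiPoly a b N) + C a * jacobiPoly a b N =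
      C ((N : K) + a) * jacobiPoly (a - 1) (b + 1) N := by
  ext k
  have hcontig := jacobiCoeff_contiguous a b N k
  rcases k with _ | k <;>
  · simp only [coeff_add, coeff_C_mul, coeff_X_mul, coeff_X_mul_zero, coeff_derivative,
      coeff_jacobiPoly, Nat.cast_add, Nat.cast_one, Nat.cast_zero, zero_add] at hcontig ⊢
    linear_combination hcontig

theorem map_jacobiCoeff {L : Type*} [Field L] (f : K →+* L) :
    f (jacobiCoeff a b N k) = jacobiCoeff (f a) (f b) N k := by
  simp [jacobiCoeff]

theorem map_jacobiPoly {L : Type*} [Field L] (f : K →+* L) :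
    (jacobiPoly a b N).map f = jacobiPoly (f a) (f b) N := by
  simp [jacobiPoly, Polynomial.map_sum, map_jacobiCoeff]

/-- The coefficient of `t ^ s * (1 + t) ^ r` in `P_{s+r}^{(a,b)}(1 + 2t)`: the product of
generalized binomial coefficients `binom(s+r+a, r) * binom(s+r+b, s)`. -/
def jacobiBernsteinCoeff (s r : ℕ) : K :=
  (∏ i ∈ range r, (a + s + i + 1)) * (∏ i ∈ range s, (b + r + i + 1)) /
    (s.factorial * r.factorial)

theorem jacobiBernsteinCoeff_swap (s r : ℕ) :
    jacobiBernsteinCoeff b a r s = jacobiBernsteinCoeff a b s r := by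
  rw [jacobiBernsteinCoeff, jacobiBernsteinCoeff, mul_comm, mul_comm (r.factorial : K)]

section CharZero

variable [CharZero K]

theorem jacobiCoeff_succ_succ :
    ((k : K) + 1) * jacobiCoeff a b (N + 1) (k + 1) =
      (N + a + b + 2) * jacobiCoeff (a + 1) (b + 1) N k := by
  have hchoose : ((N : K) + 1) * N.choose k = (N + 1).choose (k + 1) * ((k : K) + 1) := by
    exact_mod_cast congrArg (Nat.cast : ℕ → K) (Nat.add_one_mul_choose_eq N k)
  have hIco : ∏ i ∈ Ico (k + 1) (N + 1), (a + i + 1) = ∏ i ∈ Ico k N, (a + 1 + (i : K) + 1) := by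
    rw [← prod_Ico_add']
    exact prod_congr rfl fun i _ => by push_cast; ring
  have hrange : ∏ i ∈ range (k + 1), (a + b + (N + 1 : ℕ) + 1 + i) =
      (∏ i ∈ range k, (a + 1 + (b + 1) + (N : K) + 1 + i)) * (N + a + b + 2) := by
    rw [prod_range_succ']
    congr 1
    · exact prod_congr rfl fun i _ => by push_cast; ring
    · push_cast
      ring
  rw [jacobiCoeff, jacobiCoeff, hIco, hrange, Nat.factorial_succ]
  have hN : (N : K) + 1 ≠ 0 := by exact_mod_cast N.succ_ne_zero
  have hF : (N.factorial : K) ≠ 0 := by exact_mod_cast N.factorial_ne_zero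
  push_cast
  field_simp
  linear_combination (-(a + b + N + 2) * (∏ i ∈ Ico k N, (a + 1 + (i : K) + 1)) *
    ∏ i ∈ range k, (a + 1 + (b + 1) + (N : K) + 1 + i)) * hchoose

theorem derivative_jacobiPoly_succ :
    derivative (jacobiPoly a b (N + 1)) =
      C ((N : K) + a + b + 2) * jacobiPoly (a + 1) (b + 1) N := by
  ext k
  rw [coeff_derivative, coeff_C_mul, coeff_jacobiPoly, coeff_jacobiPoly, ← jacobiCoeff_succ_succ,
    mul_comm]

theorem jacobiBernsteinCoeff_succ_left (s r : ℕ) :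
    ((s : K) + 1) * jacobiBernsteinCoeff a b (s + 1) r =
      (b + r + 1) * jacobiBernsteinCoeff (a + 1) (b + 1) s r := by
  have hr : ∏ i ∈ range r, (a + (s + 1 : ℕ) + i + 1) = ∏ i ∈ range r, (a + 1 + (s : K) + i + 1) :=
    prod_congr rfl fun i _ => by push_cast; ring
  have hs : ∏ i ∈ range (s + 1), (b + r + i + 1) =
      (∏ i ∈ range s, (b + 1 + (r : K) + i + 1)) * (b + r + 1) := by
    rw [prod_range_succ', Nat.cast_zero, add_zero]
    exact congrArg (· * _) (prod_congr rfl fun i _ => by push_cast; ring)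
  have hs1 : (s : K) + 1 ≠ 0 := by exact_mod_cast s.succ_ne_zero
  rw [jacobiBernsteinCoeff, jacobiBernsteinCoeff, hr, hs, Nat.factorial_succ]
  push_cast
  field_simp

theorem jacobiBernsteinCoeff_succ_right (s r : ℕ) :
    ((r : K) + 1) * jacobiBernsteinCoeff a b s (r + 1) =
      (a + s + 1) * jacobiBernsteinCoeff (a + 1) (b + 1) s r := by
  rw [← jacobiBernsteinCoeff_swap, jacobiBernsteinCoeff_succ_left, jacobiBernsteinCoeff_swap]

theorem jacobiPoly_eq_sum_antidiagonal : jacobiPoly a b N =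
    ∑ p ∈ antidiagonal N, C (jacobiBernsteinCoeff a b p.1 p.2) * X ^ p.1 * (X + 1) ^ p.2 := by
  induction N generalizing a b with
  | zero => simp [jacobiPoly_zero, jacobiBernsteinCoeff]
  | succ N ih =>
    apply eq_of_derivative_eq_of_eval_zero_eq
    · rw [derivative_jacobiPoly_succ, ih, derivative_sum_antidiagonal_succ, mul_sum]
      refine sum_congr rfl fun p hp => ?_
      rw [jacobiBernsteinCoeff_succ_left, jacobiBernsteinCoeff_succ_right, ← mem_antidiagonal.1 hp,
        ← mul_assoc, ← mul_assoc, ← C_mul]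
      congr 3
      push_cast
      ring
    · rw [Nat.sum_antidiagonal_succ, eval_add, eval_zero_jacobiPoly]
      simp only [eval_finsetSum, eval_mul, eval_C]
      simp [jacobiBernsteinCoeff, div_eq_inv_mul]

theorem eval_neg_one_jacobiPoly : (jacobiPoly a b N).eval (-1) =
    (-1) ^ N * ((N.factorial : K)⁻¹ * ∏ i ∈ range N, (b + i + 1)) := by
  rw [jacobiPoly_eq_sum_antidiagonal, eval_finsetSum, sum_eq_single (N, 0)]
  · rw [eval_mul, eval_mul, eval_C]
    simp [jacobiBernsteinCoeff, div_eq_inv_mul, mul_comm]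
  · rintro ⟨s, r⟩ hp hne
    obtain rfl | hr := r.eq_zero_or_pos
    · simp_all
    · simp [hr.ne']
  · simp

end CharZero

end Jacobi

theorem jacobiC_eq_eval_jacobiPoly (α β : ℝ) (N : ℕ) (x : ℂ) :
    jacobiC α β N x = (jacobiPoly (α : ℂ) β N).eval ((x - 1) / 2) := by
  simp only [jacobiPoly, eval_finsetSum, eval_mul, eval_C, eval_pow, eval_X]
  simp [jacobiC, jacobiCoeff, mul_sum, mul_assoc]

theorem neg_one_pow_mul_jacobiBernsteinCoeff_pos {a b : ℝ} {s r : ℕ}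
    (ha : a < -(s + r : ℕ)) (hb : -1 < b) :
    0 < (-1) ^ r * jacobiBernsteinCoeff a b s r := by
  have hneg : (-1) ^ r * ∏ i ∈ range r, (a + s + i + 1) = ∏ i ∈ range r, -(a + s + i + 1) := by
    rw [prod_neg, card_range]
  have hpos : 0 < ∏ i ∈ range r, -(a + s + i + 1) := by
    refine prod_pos fun i hi => ?_
    have hir : (i : ℝ) + 1 ≤ r := by exact_mod_cast mem_range.1 hi
    push_cast at ha
    linarith
  have hpos' : 0 < ∏ i ∈ range s, (b + r + i + 1) := prod_pos fun i _ => by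
    linarith [r.cast_nonneg (α := ℝ), i.cast_nonneg (α := ℝ)]
  rw [jacobiBernsteinCoeff, mul_div, ← mul_assoc, hneg]
  positivity

theorem neg_one_pow_mul_eval_jacobiPoly_pos {a b : ℝ} {N : ℕ} (ha : a < -N) (hb : -1 < b) {t : ℝ}
    (ht : t ∈ Set.Icc (-1) 0) : 0 < (-1) ^ N * (jacobiPoly a b N).eval t := by
  have hsum : (-1) ^ N * (jacobiPoly a b N).eval t = ∑ p ∈ antidiagonal N,
      ((-1) ^ p.2 * jacobiBernsteinCoeff a b p.1 p.2) * ((-t) ^ p.1 * (1 + t) ^ p.2) := by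
    rw [jacobiPoly_eq_sum_antidiagonal, eval_finsetSum, mul_sum]
    refine sum_congr rfl fun p hp => ?_
    rw [← mem_antidiagonal.1 hp, pow_add, neg_pow t, add_comm 1 t]
    simp only [eval_mul, eval_C, eval_pow, eval_X, eval_add, eval_one]
    ring
  have hcoeff : ∀ p ∈ antidiagonal N, 0 < (-1) ^ p.2 * jacobiBernsteinCoeff a b p.1 p.2 :=
    fun p hp => neg_one_pow_mul_jacobiBernsteinCoeff_pos (by rwa [mem_antidiagonal.1 hp]) hb
  have ht0 : 0 ≤ -t := neg_nonneg.2 ht.2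
  have ht1 : 0 ≤ 1 + t := by linarith [ht.1]
  rw [hsum]
  refine sum_pos' (fun p hp => mul_nonneg (hcoeff p hp).le (by positivity)) ?_
  rcases ht1.eq_or_lt with h | h
  · refine ⟨(N, 0), by simp, mul_pos (hcoeff _ (by simp)) ?_⟩
    simp [show t = -1 by linarith]
  · refine ⟨(0, N), by simp, mul_pos (hcoeff _ (by simp)) ?_⟩
    simpa using pow_pos h N

section Roots

theorem eval_zero_jacobiPoly_ne_zero {K : Type*} [Field K] [CharZero K] {a : K} (b : K) {N : ℕ}
    (ha : ∀ i < N, a + i + 1 ≠ 0) : (jacobiPoly a b N).eval 0 ≠ 0 := by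
  rw [eval_zero_jacobiPoly]
  exact mul_ne_zero (inv_ne_zero (mod_cast N.factorial_ne_zero))
    (prod_ne_zero_iff.2 fun i hi => ha i (mem_range.1 hi))

theorem eval_neg_one_jacobiPoly_ne_zero {K : Type*} [Field K] [CharZero K] (a : K) {b : K} {N : ℕ}
    (hb : ∀ i < N, b + i + 1 ≠ 0) : (jacobiPoly a b N).eval (-1) ≠ 0 := by
  rw [eval_neg_one_jacobiPoly, ← eval_zero_jacobiPoly b a]
  exact mul_ne_zero (pow_ne_zero _ (neg_ne_zero.2 one_ne_zero)) (eval_zero_jacobiPoly_ne_zero a hb)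

theorem eval_derivative_jacobiPoly_ne_zero {K : Type*} [Field K] [CharZero K] {a b : K} {N : ℕ}
    (ha : ∀ i < N, a + i + 1 ≠ 0) (hb : ∀ i < N, b + i + 1 ≠ 0) {z : K}
    (hz : (jacobiPoly a b N).IsRoot z) : (derivative (jacobiPoly a b N)).eval z ≠ 0 := by
  have h0 := eval_zero_jacobiPoly_ne_zero b ha
  have h1 := eval_neg_one_jacobiPoly_ne_zero a hb
  have hode : X * (X + 1) * derivative (derivative (jacobiPoly a b N)) +
      (C (a + 1) + C (a + b + 2) * X) * derivative (jacobiPoly a b N) +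
      -C ((N : K) * (N + a + b + 1)) * jacobiPoly a b N = 0 := by
    rw [jacobiPoly_ode]
    ring
  refine eval_derivative_ne_zero_of_linear_ode hode (fun h => by simp [h] at h0) ?_ hz
  rw [eval_mul, eval_add, eval_X, eval_one]
  refine mul_ne_zero ?_ fun h => ?_
  · rintro rfl
    exact h0 hz
  · rw [eq_neg_of_add_eq_zero_left h] at hz
    exact h1 hz

variable {a b : ℝ} {N : ℕ}

theorem ofReal_add_natCast_add_one_ne_zero (ha : -1 < a) (i : ℕ) : (a : ℂ) + i + 1 ≠ 0 := by
  have h : a + i + 1 ≠ 0 := by linarith [i.cast_nonneg (α := ℝ)]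
  exact_mod_cast h

theorem exists_mem_Icc_eq_ofReal_of_isRoot_jacobiPoly (ha : -1 < a) (hb : -1 < b) {z : ℂ}
    (hz : (jacobiPoly (a : ℂ) b N).IsRoot z) : ∃ t ∈ Set.Icc (-1 : ℝ) 0, z = t := by
  refine exists_mem_Icc_eq_ofReal_of_isRoot (a := a + 1) (b := b + 1) (by linarith) (by linarith)
    (l := N * (N + a + b + 1)) ?_
    (eval_zero_jacobiPoly_ne_zero _ fun i _ => ofReal_add_natCast_add_one_ne_zero ha i)
    (eval_neg_one_jacobiPoly_ne_zero _ fun i _ => ofReal_add_natCast_add_one_ne_zero hb i) hz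
  rw [← jacobiPoly_ode]
  push_cast
  ring_nf

theorem not_isRoot_jacobiPoly_of_mem_Icc (ha : a < -N) (hb : -1 < b) {t : ℝ}
    (ht : t ∈ Set.Icc (-1) 0) : ¬ (jacobiPoly (a : ℂ) b N).IsRoot t := by
  have hpos := neg_one_pow_mul_eval_jacobiPoly_pos ha hb ht
  rw [← Complex.ofRealHom_eq_coe, ← Complex.ofRealHom_eq_coe, ← Complex.ofRealHom_eq_coe,
    ← map_jacobiPoly, IsRoot.def, eval_map_apply, map_eq_zero]
  exact right_ne_zero_of_mul hpos.ne'

end Roots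

section Rescaling

variable {K ι : Type*} [Field K] [Fintype ι] {P : K[X]} {c : K} {u : ι → K}

theorem isRoot_of_eval_half (hP : ∀ x, P.eval ((x - 1) / 2) = c * ∏ j, (x - u j)) (i : ι) :
    P.IsRoot ((u i - 1) / 2) := by
  rw [IsRoot.def, hP, prod_eq_zero (mem_univ i) (sub_self _), mul_zero]

variable [CharZero K]

theorem eq_C_mul_prod_of_eval_half (hP : ∀ x, P.eval ((x - 1) / 2) = c * ∏ j, (x - u j)) :
    P = C (2 ^ Fintype.card ι * c) * ∏ j, (X - C ((u j - 1) / 2)) := by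
  refine Polynomial.funext fun t => ?_
  have ht := hP (1 + 2 * t)
  rw [add_sub_cancel_left, mul_div_cancel_left₀ t two_ne_zero] at ht
  rw [ht, eval_mul, eval_C, eval_prod, mul_comm (2 ^ _) c, mul_assoc, Fintype.card, ← prod_const,
    ← prod_mul_distrib]
  congr 1
  refine prod_congr rfl fun j _ => ?_
  rw [eval_sub, eval_X, eval_C]
  ring

theorem coeff_card_of_eval_half (hP : ∀ x, P.eval ((x - 1) / 2) = c * ∏ j, (x - u j)) :
    P.coeff (Fintype.card ι) = 2 ^ Fintype.card ι * c := by
  have hmonic : (∏ j, (X - C ((u j - 1) / 2))).Monic :=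
    monic_prod_of_monic _ _ fun j _ => monic_X_sub_C _
  rw [eq_C_mul_prod_of_eval_half hP, coeff_C_mul, Fintype.card,
    ← natDegree_finsetProd_X_sub_C_eq_card univ fun j => (u j - 1) / 2, hmonic.coeff_natDegree,
    mul_one]

theorem comp_eq_C_mul_prod_of_eval_half (hP : ∀ x, P.eval ((x - 1) / 2) = c * ∏ j, (x - u j)) :
    P.comp (C (1 / 2) * (X - 1)) = C c * ∏ j, (X - C (u j)) := by
  refine Polynomial.funext fun x => ?_
  have hx : (C (1 / 2 : K) * (X - 1)).eval x = (x - 1) / 2 := by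
    simp [div_eq_inv_mul]
  rw [eval_comp, hx, hP]
  simp [eval_prod]

theorem injective_of_eval_half (hP : ∀ x, P.eval ((x - 1) / 2) = c * ∏ j, (x - u j))
    (h : ∀ z, P.IsRoot z → (derivative P).eval z ≠ 0) : Function.Injective u := by
  have hinj : Function.Injective fun j => (u j - 1) / 2 :=
    injective_of_eval_derivative_ne_zero (eq_C_mul_prod_of_eval_half hP) fun j =>
      h _ (isRoot_of_eval_half hP j)
  exact Function.Injective.of_comp (f := fun x => (x - 1) / 2) hinj

end Rescaling

theorem injective_append_jacobi_roots {m N : ℕ} {a b a' b' : ℝ} (ha : a < -m) (hb : -1 < b)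
    (ha' : -1 < a') (hb' : -1 < b') {c d : ℂ} {w : Fin m → ℂ} {v : Fin N → ℂ}
    (hw : ∀ x, (jacobiPoly (a : ℂ) b m).eval ((x - 1) / 2) = c * ∏ j, (x - w j))
    (hv : ∀ x, (jacobiPoly (a' : ℂ) b' N).eval ((x - 1) / 2) = d * ∏ j, (x - v j)) :
    Function.Injective (Fin.append w v) := by
  rw [Fin.append_injective_iff]
  refine ⟨injective_of_eval_half hw fun z => eval_derivative_jacobiPoly_ne_zero ?_ ?_,
    injective_of_eval_half hv fun z => eval_derivative_jacobiPoly_ne_zero ?_ ?_, ?_⟩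
  · intro i hi
    have him : (i : ℝ) + 1 ≤ m := by exact_mod_cast hi
    have hneg : a + i + 1 ≠ 0 := by linarith
    exact_mod_cast hneg
  · exact fun i _ => ofReal_add_natCast_add_one_ne_zero hb i
  · exact fun i _ => ofReal_add_natCast_add_one_ne_zero ha' i
  · exact fun i _ => ofReal_add_natCast_add_one_ne_zero hb' i
  · intro i j hij
    obtain ⟨t, ht, hvt⟩ :=
      exists_mem_Icc_eq_ofReal_of_isRoot_jacobiPoly ha' hb' (isRoot_of_eval_half hv j)
    apply not_isRoot_jacobiPoly_of_mem_Icc ha hb ht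
    rw [← hvt, ← hij]
    exact isRoot_of_eval_half hw i

section Exceptional

section

variable {K : Type*} [Field K] (δ β : K) (m N : ℕ)

/-- The numerator of the exceptional Jacobi polynomial `P_{m,m+N}^{(δ-1,β)}(1 + 2t)`, namely
`(-1) ^ m * (δ + N)` times it, written as a Wronskian-type expression in the two Jacobi polynomials
whose roots are the nodes of the determinant. -/
noncomputable def exceptionalJacobiPoly : K[X] :=
  let A := jacobiPoly (-δ) (β - 1) m
  let B := jacobiPoly δ (β - 1) N
  X * (A * derivative B - derivative A * B) + C δ * (A * B)

theorem exceptionalJacobiPoly_ode :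
    (1 + X) * derivative (exceptionalJacobiPoly δ β m N) + C β * exceptionalJacobiPoly δ β m N =
      C ((N - m + δ) * (N + m + β)) * (jacobiPoly (-δ) (β - 1) m * jacobiPoly δ (β - 1) N) := by
  have hA := jacobiPoly_ode (-δ) (β - 1) m
  have hB := jacobiPoly_ode δ (β - 1) N
  simp only [exceptionalJacobiPoly, C_add, C_mul, C_sub, C_neg, C_1, C_ofNat, map_natCast,
    derivative_add, derivative_mul, derivative_sub, derivative_C, derivative_X] at hA hB ⊢
  linear_combination jacobiPoly (-δ) (β - 1) m * hB - jacobiPoly δ (β - 1) N * hA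

end

theorem derivative_comp_half {K : Type*} [Field K] [NeZero (2 : K)] {E F : K[X]} {β : K}
    (h : (1 + X) * derivative E + C β * E = F) :
    (1 + X) * derivative (E.comp (C (1 / 2) * (X - 1))) + C β * E.comp (C (1 / 2) * (X - 1)) =
      F.comp (C (1 / 2) * (X - 1)) := by
  have h2 : (C (1 / 2) : K[X]) * 2 = 1 := by
    rw [← C_ofNat, ← C_mul, one_div_mul_cancel two_ne_zero, C_1]
  simp only [← h, derivative_comp, add_comp, mul_comp, C_comp, X_comp, one_comp, derivative_mul,
    derivative_C, derivative_sub, derivative_X, derivative_one]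
  linear_combination ((derivative E).comp (C (1 / 2) * (X - 1))) * h2

theorem mul_jacobiC_sub_one_eq_eval_derivative (a b : ℝ) (N : ℕ) (x : ℂ) :
    ((N : ℂ) + a + b + 1) * jacobiC (a + 1) (b + 1) ((N : ℤ) - 1) x =
      (derivative (jacobiPoly (a : ℂ) b N)).eval ((x - 1) / 2) := by
  cases N with
  | zero => simp [jacobiC, jacobiPoly_zero]
  | succ N =>
    rw [Nat.cast_succ (R := ℤ), add_sub_cancel_right, jacobiC_eq_eval_jacobiPoly,
      derivative_jacobiPoly_succ, eval_mul, eval_C]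
    push_cast
    ring

theorem mul_jacobiC_contiguous_eq (a b : ℝ) (N : ℕ) (x : ℂ) :
    ((N : ℂ) + a) * jacobiC (a - 1) (b + 1) N x =
      (x - 1) / 2 * (derivative (jacobiPoly (a : ℂ) b N)).eval ((x - 1) / 2) +
        a * (jacobiPoly (a : ℂ) b N).eval ((x - 1) / 2) := by
  have h := congrArg (eval ((x - 1) / 2)) (X_mul_derivative_jacobiPoly_add (a : ℂ) b N)
  simp only [eval_add, eval_mul, eval_X, eval_C] at h
  rw [jacobiC_eq_eval_jacobiPoly, h]
  push_cast
  rfl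

theorem mul_XJacC_eq_eval_exceptionalJacobiPoly {m N n : ℕ} (hn : m + N = n) {α : ℝ} (β : ℝ)
    (hα : (α : ℂ) + 1 + n - m ≠ 0) (x : ℂ) :
    ((α : ℂ) + 1 + n - m) * XJacC m α β n x =
      (-1) ^ m * (exceptionalJacobiPoly ((α : ℂ) + 1) β m N).eval ((x - 1) / 2) := by
  have hnm : (n : ℤ) - m = N := by omega
  have hA' := mul_jacobiC_contiguous_eq (-α - 1) (β - 1) m x
  have hB' := mul_jacobiC_sub_one_eq_eval_derivative (α + 1) (β - 1) N x
  have hδ : ((-α - 1 : ℝ) : ℂ) = -((α : ℂ) + 1) := by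
    push_cast
    ring
  rw [sub_add_cancel, show -α - 1 - 1 = -α - 2 by ring, hδ] at hA'
  rw [sub_add_cancel, show α + 1 + 1 = α + 2 by ring] at hB'
  rw [XJacC, ← mul_assoc, mul_div_cancel₀ _ hα, hnm, jacobiC_eq_eval_jacobiPoly (-α - 1),
    jacobiC_eq_eval_jacobiPoly (α + 1), exceptionalJacobiPoly, ← hn, hδ]
  simp only [eval_add, eval_mul, eval_X, eval_C, eval_sub]
  push_cast at hA' hB' ⊢
  linear_combination ((-1 : ℂ) ^ m * (x - 1) / 2 *
      (jacobiPoly (-((α : ℂ) + 1)) (β - 1) m).eval ((x - 1) / 2)) * hB' -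
    ((-1 : ℂ) ^ m * (jacobiPoly ((α : ℂ) + 1) (β - 1) N).eval ((x - 1) / 2)) * hA'

end Exceptional

section Functional

/-- The last row of the determinant: the moments of the functional `momentFunctional β x`. -/
noncomputable def moment (β : ℝ) (x : ℂ) (k : ℕ) : ℂ :=
  (-1) ^ k * k.factorial * Rpartial k x β / poch β (k + 1)

/-- The linear functional on polynomials sending `X ^ k` to `moment β x k`. It sends a polynomial
`F` to `E(x)`, where `E` is the polynomial solution of `(1 + X) E' + β E = F`. -/
noncomputable def momentFunctional (β : ℝ) (x : ℂ) : ℂ[X] →ₗ[ℂ] ℂ :=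
  (basisMonomials ℂ).constr ℂ (moment β x)

theorem momentFunctional_X_pow (β : ℝ) (x : ℂ) (k : ℕ) :
    momentFunctional β x (X ^ k) = moment β x k := by
  simpa [momentFunctional, X_pow_eq_monomial] using (basisMonomials ℂ).constr_basis ℂ (moment β x) k

theorem poch_succ (a : ℂ) (k : ℕ) : poch a (k + 1) = poch a k * (a + k) :=
  prod_range_succ _ _

theorem Rpartial_succ (k : ℕ) (x : ℂ) (β : ℝ) : Rpartial (k + 1) x β =
    Rpartial k x β + poch β (k + 1) * (-x) ^ (k + 1) / (k + 1).factorial :=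
  sum_range_succ _ _

variable {β : ℝ}

theorem moment_zero (hβ : β ≠ 0) (x : ℂ) : β * moment β x 0 = 1 := by
  simp [moment, Rpartial, poch, hβ]

theorem moment_succ (hβ : ∀ i : ℕ, (β : ℂ) + i ≠ 0) (x : ℂ) (k : ℕ) :
    ((k : ℂ) + 1 + β) * moment β x (k + 1) + (k + 1) * moment β x k = x ^ (k + 1) := by
  have hpoch : poch (β : ℂ) (k + 1) ≠ 0 := prod_ne_zero_iff.2 fun i _ => hβ i
  have hβk : (β : ℂ) + (k + 1) ≠ 0 := by exact_mod_cast hβ (k + 1)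
  have hfact : (k.factorial : ℂ) ≠ 0 := by exact_mod_cast k.factorial_ne_zero
  have hk : (k : ℂ) + 1 ≠ 0 := by exact_mod_cast k.succ_ne_zero
  have hsign : (-1) ^ (k + 1) * (-x) ^ (k + 1) = x ^ (k + 1) := by
    rw [← mul_pow, neg_one_mul, neg_neg]
  rw [← hsign, moment, moment, poch_succ _ (k + 1), Rpartial_succ, Nat.factorial_succ]
  push_cast
  field_simp
  ring

theorem momentFunctional_eq_eval (hβ : ∀ i : ℕ, (β : ℂ) + i ≠ 0) (x : ℂ) (E : ℂ[X]) :
    momentFunctional β x ((1 + X) * derivative E + C (β : ℂ) * E) = E.eval x := by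
  induction E using Polynomial.induction_on' with
  | add p q hp hq =>
    rw [eval_add, ← hp, ← hq, ← map_add, derivative_add]
    ring_nf
  | monomial k r =>
    rw [← C_mul_X_pow_eq_monomial, eval_C_mul, eval_pow, eval_X]
    cases k with
    | zero =>
      have hE : (1 + X) * derivative (C r * X ^ 0) + C (β : ℂ) * (C r * X ^ 0) =
          (r * β) • X ^ 0 := by
        rw [pow_zero, mul_one, derivative_C, smul_eq_C_mul, C_mul]
        ring
      have hβ0 : β ≠ 0 := by simpa using hβ 0
      rw [hE, map_smul, momentFunctional_X_pow, smul_eq_mul, mul_assoc, moment_zero hβ0, pow_zero]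
    | succ k =>
      have hE : (1 + X) * derivative (C r * X ^ (k + 1)) + C (β : ℂ) * (C r * X ^ (k + 1)) =
          r • (((k : ℂ) + 1 + β) • X ^ (k + 1) + ((k : ℂ) + 1) • X ^ k) := by
        simp only [derivative_C_mul, derivative_X_pow_succ, smul_eq_C_mul, C_add, map_natCast, C_1]
        ring
      rw [hE, map_smul, map_add, map_smul, map_smul, momentFunctional_X_pow,
        momentFunctional_X_pow, smul_eq_mul, smul_eq_mul, smul_eq_mul, moment_succ hβ]

end Functional

section Determinant

open Matrix

variable {R : Type*} [CommRing R] {n : ℕ}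

theorem prod_Ioi_castSucc {M : Type*} [CommMonoid M] (f : Fin (n + 1) → M) (i : Fin n) :
    ∏ j ∈ Ioi i.castSucc, f j = (∏ j ∈ Ioi i, f j.castSucc) * f (Fin.last n) := by
  simp only [← filter_lt_eq_Ioi, prod_filter, Fin.prod_univ_castSucc, Fin.castSucc_lt_castSucc_iff,
    if_pos i.castSucc_lt_last]

theorem det_vandermonde_snoc (v : Fin n → R) (a : R) :
    (vandermonde (Fin.snoc v a : Fin (n + 1) → R)).det =
      (vandermonde v).det * ∏ j, (a - v j) := by
  have hlast : Ioi (Fin.last n) = ∅ := Ioi_top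
  simp only [det_vandermonde, Fin.prod_univ_castSucc, prod_Ioi_castSucc, Fin.snoc_castSucc,
    Fin.snoc_last, prod_mul_distrib, hlast, prod_empty, mul_one]

theorem det_eq_det_vandermonde_mul_functional (W : Fin n → R) (L : R[X] →ₗ[R] R)
    (M : Matrix (Fin (n + 1)) (Fin (n + 1)) R)
    (hM : ∀ (i : Fin n) (k : Fin (n + 1)), M i.castSucc k = W i ^ (k : ℕ))
    (hlast : ∀ k : Fin (n + 1), M (Fin.last n) k = L (X ^ (k : ℕ))) :
    M.det = (vandermonde W).det * L (∏ j, (X - C (W j))) := by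
  set V : Matrix (Fin (n + 1)) (Fin (n + 1)) R[X] :=
    vandermonde (Fin.snoc (fun i => C (W i)) X : Fin (n + 1) → R[X]) with hV
  have hVdet : V.det = (vandermonde W).det • ∏ j, (X - C (W j)) := by
    rw [hV, det_vandermonde_snoc, smul_eq_C_mul, RingHom.map_det]
    congr 2
    ext i j
    simp [vandermonde_apply]
  have hminor : ∀ k : Fin (n + 1), (V.submatrix (Fin.last n).succAbove k.succAbove).det =
      C (M.submatrix (Fin.last n).succAbove k.succAbove).det := by
    intro k
    rw [RingHom.map_det]
    congr 1
    ext i j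
    simp [hV, vandermonde_apply, hM]
  -- Replacing the last row `X ^ k` of `V` by `L (X ^ k)` amounts to applying `L` to `det V`, as the
  -- minors of the Laplace expansion along that row are constants.
  have hL : L V.det = M.det := by
    rw [det_succ_row V (Fin.last n), det_succ_row M (Fin.last n), map_sum]
    refine sum_congr rfl fun k _ => ?_
    have hterm : (-1) ^ ((Fin.last n : ℕ) + k) * V (Fin.last n) k *
        (V.submatrix (Fin.last n).succAbove k.succAbove).det =
        ((-1) ^ ((Fin.last n : ℕ) + k) * (M.submatrix (Fin.last n).succAbove k.succAbove).det) •
          X ^ (k : ℕ) := by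
      rw [hminor, smul_eq_C_mul, hV, vandermonde_apply, Fin.snoc_last]
      simp only [C_mul, C_pow, C_neg, C_1]
      ring
    rw [hterm, map_smul, hlast, smul_eq_mul]
    ring
  rw [← hL, hVdet, map_smul, smul_eq_mul]

end Determinant

section Assembly

variable {m N n : ℕ}

theorem eval_mul_half_eq_prod_append {K : Type*} [Field K] {P Q : K[X]} {c d : K} {w : Fin m → K}
    {v : Fin N → K} (hn : n = m + N) (hw : ∀ x, P.eval ((x - 1) / 2) = c * ∏ j, (x - w j))
    (hv : ∀ x, Q.eval ((x - 1) / 2) = d * ∏ j, (x - v j)) (x : K) :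
    (P * Q).eval ((x - 1) / 2) = c * d * ∏ j, (x - Fin.append w v (Fin.cast hn j)) := by
  subst hn
  simp only [eval_mul, hw, hv, Fin.cast_eq_self, Fin.prod_univ_add, Fin.append_left,
    Fin.append_right]
  ring

theorem jacobiCoeff_self (a b : ℂ) (N : ℕ) :
    jacobiCoeff a b N N = (N.factorial : ℂ)⁻¹ * poch (a + b + N + 1) N := by
  simp [jacobiCoeff, poch]

theorem factorial_mul_coeff_jacobiPoly_mul (a b a' b' : ℂ) (hn : m + N = n) :
    (n.factorial : ℂ) * (jacobiPoly a b m * jacobiPoly a' b' N).coeff n =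
      n.choose m * poch (a + b + m + 1) m * poch (a' + b' + N + 1) N := by
  have hchoose : (n.choose m : ℂ) * m.factorial * N.factorial = n.factorial := by
    subst hn
    have h := Nat.choose_mul_factorial_mul_factorial (Nat.le_add_right m N)
    rw [Nat.add_sub_cancel_left] at h
    exact_mod_cast h
  have hm : (m.factorial : ℂ) ≠ 0 := by exact_mod_cast m.factorial_ne_zero
  have hN : (N.factorial : ℂ) ≠ 0 := by exact_mod_cast N.factorial_ne_zero
  rw [← hchoose, ← hn, coeff_mul_add_eq_of_natDegree_le (natDegree_jacobiPoly_le a b m)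
    (natDegree_jacobiPoly_le a' b' N), coeff_jacobiPoly, coeff_jacobiPoly, jacobiCoeff_self,
    jacobiCoeff_self]
  field_simp

theorem eval_exceptionalJacobiPoly {δ c : ℂ} {β : ℝ} (hβ : ∀ i : ℕ, (β : ℂ) + i ≠ 0)
    {W : Fin n → ℂ}
    (hW : ∀ x, (jacobiPoly (-δ) (β - 1) m * jacobiPoly δ (β - 1) N).eval ((x - 1) / 2) =
      c * ∏ j, (x - W j)) (x : ℂ) :
    (exceptionalJacobiPoly δ β m N).eval ((x - 1) / 2) =
      (N - m + δ) * (N + m + β) * c * momentFunctional β x (∏ j, (X - C (W j))) := by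
  have hx : (C (1 / 2 : ℂ) * (X - 1)).eval x = (x - 1) / 2 := by
    simp [div_eq_inv_mul]
  rw [← hx, ← eval_comp, ← momentFunctional_eq_eval hβ,
    derivative_comp_half (exceptionalJacobiPoly_ode δ β m N), mul_comp, C_comp,
    comp_eq_C_mul_prod_of_eval_half hW, ← mul_assoc, ← C_mul, ← smul_eq_C_mul, map_smul,
    smul_eq_mul]

theorem factorial_mul_XJacC_eq_momentFunctional (hn : m + N = n) {α β : ℝ}
    (hα : (α : ℂ) + 1 + n - m ≠ 0) (hβ : ∀ i : ℕ, (β : ℂ) + i ≠ 0) {c : ℂ} {W : Fin n → ℂ}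
    (hW : ∀ x, (jacobiPoly ((-α - 1 : ℝ) : ℂ) (β - 1 : ℝ) m *
      jacobiPoly ((α + 1 : ℝ) : ℂ) (β - 1 : ℝ) N).eval ((x - 1) / 2) = c * ∏ j, (x - W j)) (x : ℂ) :
    (n.factorial : ℂ) * (((α : ℂ) + 1 + n - m) * XJacC m α β n x) =
      (-1) ^ m * (2 ^ n)⁻¹ * n.choose m * (n + (α + 1) - 2 * m) * (n + β) *
        poch (β - (α + 1) + m) m * poch (α + 1 + β + n - m) N *
        momentFunctional β x (∏ j, (X - C (W j))) := by
  have hnC : (n : ℂ) = m + N := by exact_mod_cast hn.symm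
  have hN : (α : ℂ) + 1 + (β - 1) + N + 1 = α + 1 + β + n - m := by
    rw [hnC]
    ring
  have hm : -((α : ℂ) + 1) + (β - 1) + m + 1 = β - (α + 1) + m := by ring
  have hκ₁ : (N : ℂ) - m + (α + 1) = n + (α + 1) - 2 * m := by
    rw [hnC]
    ring
  have hκ₂ : (N : ℂ) + m + β = n + β := by
    rw [hnC]
    ring
  have hneg : -(α : ℂ) - 1 = -((α : ℂ) + 1) := by ring
  push_cast at hW
  rw [hneg] at hW
  have hlead := factorial_mul_coeff_jacobiPoly_mul (-((α : ℂ) + 1)) (β - 1) ((α : ℂ) + 1) (β - 1) hn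
  have hcoeff := coeff_card_of_eval_half hW
  rw [Fintype.card_fin] at hcoeff
  rw [hcoeff, hm, hN] at hlead
  have h2 : ((2 : ℂ) ^ n)⁻¹ * 2 ^ n = 1 := inv_mul_cancel₀ (pow_ne_zero n two_ne_zero)
  rw [mul_XJacC_eq_eval_exceptionalJacobiPoly hn β hα, eval_exceptionalJacobiPoly hβ hW, hκ₁, hκ₂]
  set κ := (-1) ^ m * ((n : ℂ) + (α + 1) - 2 * m) * (n + β) *
    momentFunctional β x (∏ j, (X - C (W j)))
  linear_combination κ * (2 ^ n)⁻¹ * hlead - κ * n.factorial * c * h2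

end Assembly

end Polynomials

theorem stmt10 (m : ℕ) (α β : ℝ) (hβ : 0 < β) (hα : 0 < α + 1 - m)
    (hexc : ∀ k : ℕ, k < m → α + 1 - m - β ≠ k) (n : ℕ) (hmn : m ≤ n)
    (w : Fin m → ℂ) (v : Fin (n - m) → ℂ) (c d : ℂ)
    (hw : ∀ X : ℂ, jacobiC (-α - 1) (β - 1) (m : ℤ) X = c * ∏ j, (X - w j))
    (hv : ∀ X : ℂ, jacobiC (α + 1) (β - 1) ((n : ℤ) - m) X = d * ∏ j, (X - v j))
    (W : Fin n → ℂ)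
    (hW : W = fun j => Fin.append w v (Fin.cast (show n = m + (n - m) by omega) j))
    (M : ℂ → Matrix (Fin (n + 1)) (Fin (n + 1)) ℂ)
    (hM : ∀ x : ℂ, M x = Matrix.of fun (i k : Fin (n + 1)) =>
      if h : (i : ℕ) < n then (W ⟨i, h⟩) ^ (k : ℕ)
      else (-1 : ℂ) ^ (k : ℕ) * (Nat.factorial (k : ℕ) : ℂ) * Rpartial (k : ℕ) x β /
        poch (β : ℂ) ((k : ℕ) + 1)) :
    (∀ x : ℂ,
      (Nat.factorial n : ℂ) * ((α : ℂ) + 1 + n - m) *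
          (∏ i : Fin n, ∏ j ∈ Finset.Ioi i, (W j - W i)) * XJacC m α β n x =
        (-1 : ℂ) ^ m * ((2 : ℂ) ^ n)⁻¹ * (n.choose m : ℂ) *
          ((n : ℂ) + (α + 1 : ℝ) - 2 * m) * ((n : ℂ) + (β : ℂ)) *
          poch ((β : ℂ) - (α + 1 : ℝ) + m) m *
          poch (((α + 1 : ℝ) : ℂ) + β + n - m) (n - m) * (M x).det) ∧
      Function.Injective W := by
  have hn : n = m + (n - m) := (Nat.add_sub_of_le hmn).symm
  have hα' : (α : ℂ) + 1 + n - m ≠ 0 := by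
    have h : α + 1 + n - m ≠ 0 := by linarith [n.cast_nonneg (α := ℝ)]
    exact_mod_cast h
  have hβ' (i : ℕ) : (β : ℂ) + i ≠ 0 := by
    have h : β + i ≠ 0 := by positivity
    exact_mod_cast h
  rw [← Nat.cast_sub hmn] at hv
  simp only [jacobiC_eq_eval_jacobiPoly] at hw hv
  have hAB := eval_mul_half_eq_prod_append hn hw hv
  simp only [fun j => (congrFun hW j).symm] at hAB
  refine ⟨fun x => ?_, hW ▸ (injective_append_jacobi_roots (by linarith) (by linarith)
    (by linarith) (by linarith) hw hv).comp (Fin.cast_injective hn)⟩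
  have hX := factorial_mul_XJacC_eq_momentFunctional hn.symm hα' hβ' hAB x
  rw [det_eq_det_vandermonde_mul_functional W (momentFunctional β x) (M x) (by simp [hM])
    (by simp [hM, momentFunctional_X_pow, moment]), Matrix.det_vandermonde]
  push_cast
  linear_combination (∏ i : Fin n, ∏ j ∈ Ioi i, (W j - W i)) * hX
end

section
/- Let n ≥ 3. Then for every x ∈ ℝ, H_{2,n}^{({1,1})}(x) = 8n(n−1)(n−2)·∫_0^x H_{{1,1}}(t)·H_{n−3}(t) dt + 16(n−1)(n−2)·H_{n−2}(0), and also H_{2,n}^{({1,1})}(x) = ∫_0^x H_{{1,1}}(t)·H_n'''(t) dt + 8(n−2)·H_{n−1}'(0). -/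
open Polynomial MeasureTheory

/-- Physicists' Hermite polynomials: `H_0 = 1`, `H_n = 2x H_{n-1} - H_{n-1}'`. -/
noncomputable def hermitePhys : ℕ → Polynomial ℝ
  | 0 => 1
  | n + 1 => 2 * Polynomial.X * hermitePhys n - Polynomial.derivative (hermitePhys n)

/-- Exceptional `X_2`-Hermite polynomial for the partition `{1,1}`. -/
noncomputable def XHerm (n : ℕ) (x : ℝ) : ℝ :=
  Matrix.det
    !![2 * x, 4 * x ^ 2 - 2, (hermitePhys n).eval x;
       2, 8 * x, ((hermitePhys n).derivative).eval x;
       0, 8, ((hermitePhys n).derivative.derivative).eval x]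

/-!
The Wronskian `W(f, g, h)` of three polynomials satisfies `W(f, g, h)' = W(f, g) h'''` as soon as
`f''' = g''' = 0`, because differentiating the determinant only affects its last row. For `f = H_1`
and `g = H_2` this makes `XHerm n` an antiderivative of `4 (2 t² + 1) H_n'''(t)`. The identity
`H_n' = 2 n H_{n-1}` turns `H_n'''` into a multiple of `H_{n-3}`; together with the recurrence at
`0`, which reads `H_n(0) = -H_{n-1}'(0)`, it gives the value of `XHerm n` at `0`.
-/

section Wronskian

variable {R : Type*} [CommRing R]

theorem det_fin_three_of (a b c d e f g h i : R) :
    Matrix.det !![a, b, c; d, e, f; g, h, i] =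
      a * e * i - a * f * h - b * d * i + b * f * g + c * d * h - c * e * g := by
  simp [Matrix.det_fin_three]

/-- The Wronskian of three polynomials, extending Mathlib's two-polynomial `wronskian`; it expresses
`XHerm` as the value of a polynomial. The rows are the successive derivatives, as in `XHerm`. -/
noncomputable def wronskian₃ (f g h : R[X]) : R[X] :=
  Matrix.det
    !![f, g, h;
       derivative f, derivative g, derivative h;
       derivative^[2] f, derivative^[2] g, derivative^[2] h]

theorem derivative_wronskian₃ (f g h : R[X]) :
    derivative (wronskian₃ f g h) =
      Matrix.det
        !![f, g, h;
           derivative f, derivative g, derivative h;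
           derivative^[3] f, derivative^[3] g, derivative^[3] h] := by
  simp only [wronskian₃, det_fin_three_of, Function.iterate_succ_apply',
    Function.iterate_zero_apply, derivative_add, derivative_sub, derivative_mul]
  ring

theorem derivative_wronskian₃_of_iterate_derivative_eq_zero {f g : R[X]}
    (hf : derivative^[3] f = 0) (hg : derivative^[3] g = 0) (h : R[X]) :
    derivative (wronskian₃ f g h) = wronskian f g * derivative^[3] h := by
  rw [derivative_wronskian₃, hf, hg, det_fin_three_of, wronskian]
  ring

end Wronskian

theorem integral_eval_derivative (p : ℝ[X]) (a b : ℝ) :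
    ∫ t in a..b, (derivative p).eval t = p.eval b - p.eval a :=
  intervalIntegral.integral_eq_sub_of_hasDerivAt (fun t _ ↦ p.hasDerivAt t)
    ((derivative p).continuous.intervalIntegrable a b)

theorem hermitePhys_zero : hermitePhys 0 = 1 := rfl

theorem hermitePhys_succ (n : ℕ) :
    hermitePhys (n + 1) = 2 * X * hermitePhys n - derivative (hermitePhys n) := rfl

theorem hermitePhys_one : hermitePhys 1 = 2 * X := by
  simp [hermitePhys_succ, hermitePhys_zero]

theorem hermitePhys_two : hermitePhys 2 = 4 * X ^ 2 - 2 := by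
  simp only [hermitePhys_succ 1, hermitePhys_one, derivative_mul, derivative_ofNat, derivative_X]
  ring

theorem eval_zero_hermitePhys_succ (n : ℕ) :
    (hermitePhys (n + 1)).eval 0 = -(derivative (hermitePhys n)).eval 0 := by
  simp [hermitePhys_succ]

theorem derivative_hermitePhys (n : ℕ) :
    derivative (hermitePhys n) = 2 * (n : ℝ[X]) * hermitePhys (n - 1) := by
  induction n with
  | zero => simp [hermitePhys_zero]
  | succ n ih =>
    have leibniz : derivative (hermitePhys (n + 1)) =
        2 * hermitePhys n + 2 * X * derivative (hermitePhys n)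
          - derivative (derivative (hermitePhys n)) := by
      simp [hermitePhys_succ, derivative_mul]
    have second_derivative : derivative (derivative (hermitePhys n)) =
        2 * (n : ℝ[X]) * derivative (hermitePhys (n - 1)) := by
      simp [ih, derivative_mul]
    have recurrence : (n : ℝ[X]) * hermitePhys n =
        (n : ℝ[X]) * (2 * X * hermitePhys (n - 1) - derivative (hermitePhys (n - 1))) := by
      cases n with
      | zero => simp
      | succ n => rw [Nat.add_sub_cancel, ← hermitePhys_succ]
    rw [leibniz, second_derivative, ih, Nat.add_sub_cancel]
    push_cast
    linear_combination -2 * recurrence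

theorem derivative_hermitePhys_one : derivative (hermitePhys 1) = 2 := by
  simp [hermitePhys_one, derivative_mul]

theorem derivative_hermitePhys_two : derivative (hermitePhys 2) = 8 * X := by
  rw [derivative_hermitePhys, hermitePhys_one]
  push_cast
  ring

theorem iterate_derivative_hermitePhys (n k : ℕ) :
    derivative^[k] (hermitePhys n) =
      2 ^ k * (n.descFactorial k : ℝ[X]) * hermitePhys (n - k) := by
  induction k with
  | zero => simp
  | succ k ih =>
    have derivative_const_mul :
        derivative (2 ^ k * (n.descFactorial k : ℝ[X]) * hermitePhys (n - k)) =
          2 ^ k * (n.descFactorial k : ℝ[X]) * derivative (hermitePhys (n - k)) := by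
      simp [derivative_mul, derivative_pow]
    rw [Function.iterate_succ_apply', ih, derivative_const_mul, derivative_hermitePhys,
      Nat.sub_sub, Nat.descFactorial_succ]
    push_cast
    ring

theorem iterate_derivative_hermitePhys_eq_zero {n k : ℕ} (h : n < k) :
    derivative^[k] (hermitePhys n) = 0 := by
  simp [iterate_derivative_hermitePhys, Nat.descFactorial_of_lt h]

theorem wronskian_hermitePhys_one_two :
    wronskian (hermitePhys 1) (hermitePhys 2) = 4 * (2 * X ^ 2 + 1) := by
  rw [wronskian, derivative_hermitePhys_one, derivative_hermitePhys_two, hermitePhys_one,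
    hermitePhys_two]
  ring

theorem XHerm_eq_eval_wronskian₃ (n : ℕ) (x : ℝ) :
    XHerm n x = (wronskian₃ (hermitePhys 1) (hermitePhys 2) (hermitePhys n)).eval x := by
  have second_derivative_one : derivative^[2] (hermitePhys 1) = 0 :=
    iterate_derivative_hermitePhys_eq_zero one_lt_two
  have second_derivative_two : derivative^[2] (hermitePhys 2) = 8 := by
    norm_num [iterate_derivative_hermitePhys, hermitePhys_zero]
  rw [wronskian₃, second_derivative_one, second_derivative_two, derivative_hermitePhys_one,
    derivative_hermitePhys_two, hermitePhys_one, hermitePhys_two]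
  simp [XHerm, det_fin_three_of]

theorem derivative_wronskian₃_hermitePhys_one_two (h : ℝ[X]) :
    derivative (wronskian₃ (hermitePhys 1) (hermitePhys 2) h) =
      4 * (2 * X ^ 2 + 1) * derivative^[3] h := by
  rw [derivative_wronskian₃_of_iterate_derivative_eq_zero
    (iterate_derivative_hermitePhys_eq_zero (by norm_num))
    (iterate_derivative_hermitePhys_eq_zero (by norm_num)), wronskian_hermitePhys_one_two]

theorem XHerm_eq_integral_add (n : ℕ) (x : ℝ) :
    XHerm n x =
      (∫ t in (0 : ℝ)..x, 4 * (2 * t ^ 2 + 1) * (derivative^[3] (hermitePhys n)).eval t)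
        + XHerm n 0 := by
  have ftc := integral_eval_derivative
    (wronskian₃ (hermitePhys 1) (hermitePhys 2) (hermitePhys n)) 0 x
  simp only [derivative_wronskian₃_hermitePhys_one_two, ← XHerm_eq_eval_wronskian₃] at ftc
  simpa using eq_add_of_sub_eq ftc.symm

theorem XHerm_zero_right {n : ℕ} (hn : n ≠ 0) :
    XHerm n 0 = 8 * ((n : ℝ) - 2) * (derivative (hermitePhys (n - 1))).eval 0 := by
  have eval_zero : (hermitePhys n).eval 0 = -(derivative (hermitePhys (n - 1))).eval 0 := by
    rw [← eval_zero_hermitePhys_succ, Nat.sub_one_add_one hn]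
  have second_derivative_eval_zero : (derivative (derivative (hermitePhys n))).eval 0 =
      2 * (n : ℝ) * (derivative (hermitePhys (n - 1))).eval 0 := by
    simp [derivative_hermitePhys n, derivative_mul]
  rw [XHerm, det_fin_three_of, eval_zero, second_derivative_eval_zero]
  ring

theorem integral_mul_eval_iterate_derivative_hermitePhys (w : ℝ → ℝ) (n k : ℕ) (a b : ℝ) :
    ∫ t in a..b, w t * (derivative^[k] (hermitePhys n)).eval t =
      2 ^ k * n.descFactorial k * ∫ t in a..b, w t * (hermitePhys (n - k)).eval t := by
  rw [← intervalIntegral.integral_const_mul]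
  congr 1 with t
  simp only [iterate_derivative_hermitePhys, eval_mul, eval_pow, eval_ofNat, eval_natCast]
  ring

theorem stmt11 (n : ℕ) (hn : 3 ≤ n) :
    ∀ x : ℝ,
      XHerm n x =
          8 * (n : ℝ) * ((n : ℝ) - 1) * ((n : ℝ) - 2) *
              (∫ t in (0 : ℝ)..x, 4 * (2 * t ^ 2 + 1) * (hermitePhys (n - 3)).eval t)
            + 16 * ((n : ℝ) - 1) * ((n : ℝ) - 2) * (hermitePhys (n - 2)).eval 0 ∧
      XHerm n x =
          (∫ t in (0 : ℝ)..x,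
              4 * (2 * t ^ 2 + 1) * ((hermitePhys n).derivative.derivative.derivative).eval t)
            + 8 * ((n : ℝ) - 2) * ((hermitePhys (n - 1)).derivative).eval 0 := by
  intro x
  have XHerm_eq := XHerm_eq_integral_add n x
  rw [XHerm_zero_right (by lia)] at XHerm_eq
  refine ⟨?_, XHerm_eq⟩
  have integral_eq := integral_mul_eval_iterate_derivative_hermitePhys
    (fun t ↦ 4 * (2 * t ^ 2 + 1)) n 3 0 x
  have cast_sub_one : ((n - 1 : ℕ) : ℝ) = n - 1 := Nat.cast_pred (by lia)
  have cast_descFactorial : (n.descFactorial 3 : ℝ) = (n - 2) * ((n - 1) * n) := by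
    simp [Nat.descFactorial_succ, cast_sub_one, Nat.cast_sub (show 2 ≤ n by lia)]
  have derivative_eval_zero : (derivative (hermitePhys (n - 1))).eval 0 =
      2 * ((n : ℝ) - 1) * (hermitePhys (n - 2)).eval 0 := by
    simp [derivative_hermitePhys (n - 1), cast_sub_one, Nat.sub_sub]
  rw [XHerm_eq, integral_eq, cast_descFactorial, derivative_eval_zero]
  ring
end

section
/- Let m ∈ ℕ, let α > m−1, and let n ≥ m. Then the polynomial identity (d/dx)L^{II,(α)}_{m,n}(x) − L^{II,(α)}_{m,n}(x) = (α+n+1−2m)·L_m^{(−α−1)}(x)·L_{n−m}^{(α+1)}(x) holds for all x. -/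
open Finset

/-- Generalized binomial coefficient `C(t, j) = t(t-1)⋯(t-j+1)/j!`. -/
noncomputable def genBinom (t : ℝ) (j : ℕ) : ℝ :=
  (∏ i ∈ Finset.range j, (t - i)) / (Nat.factorial j)

/-- Generalized Laguerre polynomial `L_n^{(α)}(x)`, with the convention
`L_n^{(α)} = 0` for negative integer index `n`. -/
noncomputable def laguerre (α : ℝ) (n : ℤ) (x : ℝ) : ℝ :=
  if 0 ≤ n then
    ∑ k ∈ Finset.range (n.toNat + 1),
      ((-1 : ℝ) ^ k / (Nat.factorial k)) * genBinom ((n : ℝ) + α) (n.toNat - k) * x ^ k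
  else 0

/-- Type-II exceptional `X_m`-Laguerre polynomial. -/
noncomputable def XLagII (m : ℕ) (α : ℝ) (n : ℕ) (x : ℝ) : ℝ :=
  x * laguerre (-α - 1) (m : ℤ) x * laguerre (α + 2) ((n : ℤ) - m - 1) x
    + ((m : ℝ) - α - 1) * laguerre (-α - 2) (m : ℤ) x * laguerre (α + 1) ((n : ℤ) - m) x

/-!
Put `a = -α - 1`, `p = L_m^{(a)}` and `q = L_{n-m}^{(-a)}`. The contiguous relation
`x p' + a p = (m + a) L_m^{(a-1)}` and `q' = -L_{n-m-1}^{(1-a)}` turn the exceptional polynomial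
into `F = a p q - x W(p, q)`, where `W` is the Wronskian. Since `p` and `q` solve Laguerre equations
with opposite parameters, `x W(p, q)' = (x - 1) W(p, q) + a (p q)' + (2m - n) p q`. Differentiating
`F` therefore cancels `a (p q)'` and leaves `F' - F = (n - 2m - a) p q`.
-/

section RingChoose

variable {R : Type*} [CommRing R] [BinomialRing R]

theorem succ_mul_ringChoose_succ (r : R) (k : ℕ) :
    ((k : R) + 1) * Ring.choose r (k + 1) = (r - k) * Ring.choose r k := by
  simpa [mul_comm] using Ring.choose_smul_choose r k.le_succ

theorem sub_mul_ringChoose (r : R) (k : ℕ) :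
    (r - k) * Ring.choose r k = r * Ring.choose (r - 1) k := by
  rw [← succ_mul_ringChoose_succ]
  simpa using Ring.choose_smul_choose r (Nat.succ_le_succ k.zero_le)

end RingChoose

theorem genBinom_eq_ringChoose (t : ℝ) (j : ℕ) : genBinom t j = Ring.choose t j := by
  rw [genBinom, Ring.choose_eq_smul, ← descPochhammer_eval_eq_prod_range,
    ← descPochhammer_map (algebraMap ℤ ℝ), Polynomial.eval_map_algebraMap,
    Polynomial.aeval_eq_smeval, smul_eq_mul, div_eq_inv_mul]

open Polynomial

section LaguerreEquation

variable {R : Type*} [CommRing R]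

/-- The polynomial `p` solves Laguerre's differential equation `x p'' + (a + 1 - x) p' + c p = 0`;
the eigenvalue `c` is not required to be a natural number. -/
def IsLaguerreSolution (a c : R) (p : R[X]) : Prop :=
  X * derivative (derivative p) + (C (a + 1) - X) * derivative p + C c * p = 0

/-- The bilinear concomitant `a p q - x W(p, q)` of two polynomials, where `W(p, q) = p q' - p' q`
is the Wronskian. It expresses the exceptional polynomials through classical Laguerre polynomials
of parameters `a` and `-a`. -/
noncomputable def laguerreConcomitant (a : R) (p q : R[X]) : R[X] :=
  C a * (p * q) - X * wronskian p q

theorem derivative_wronskian (p q : R[X]) :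
    derivative (wronskian p q) = p * derivative (derivative q) - derivative (derivative p) * q := by
  simp only [wronskian, derivative_sub, derivative_mul]
  ring

theorem IsLaguerreSolution.X_mul_derivative_wronskian {a c d : R} {p q : R[X]}
    (hp : IsLaguerreSolution a c p) (hq : IsLaguerreSolution (-a) d q) :
    X * derivative (wronskian p q) =
      (X - 1) * wronskian p q + C a * derivative (p * q) + C (c - d) * (p * q) := by
  unfold IsLaguerreSolution at hp hq
  rw [derivative_wronskian, wronskian, derivative_mul]
  simp only [map_add, map_sub, map_neg, map_one] at hp hq ⊢
  linear_combination p * hq - q * hp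

theorem IsLaguerreSolution.derivative_laguerreConcomitant_sub {a c d : R} {p q : R[X]}
    (hp : IsLaguerreSolution a c p) (hq : IsLaguerreSolution (-a) d q) :
    derivative (laguerreConcomitant a p q) - laguerreConcomitant a p q =
      C (d - c - a) * (p * q) := by
  have hW := hp.X_mul_derivative_wronskian hq
  rw [laguerreConcomitant, derivative_sub, derivative_C_mul, derivative_mul (f := X), derivative_X]
  simp only [map_sub] at hW ⊢
  linear_combination -hW

end LaguerreEquation

section LaguerrePoly

variable {K : Type*} [Field K] [CharZero K]

/-- The generalized Laguerre polynomial `L_n^{(a)}` as an element of `K[X]`, with the generalized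
binomial coefficients given by `Ring.choose`. -/
noncomputable def laguerrePoly (a : K) (n : ℕ) : K[X] :=
  ∑ k ∈ range (n + 1), monomial k ((-1) ^ k / k.factorial * Ring.choose (n + a) (n - k))

theorem coeff_laguerrePoly (a : K) (n k : ℕ) :
    (laguerrePoly a n).coeff k =
      if k ≤ n then (-1) ^ k / k.factorial * Ring.choose (n + a) (n - k) else 0 := by
  simp only [laguerrePoly, finsetSum_coeff, coeff_monomial, Finset.sum_ite_eq', Finset.mem_range,
    Order.lt_add_one_iff]

theorem coeff_laguerrePoly_succ (a : K) (n k : ℕ) :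
    ((k : K) + 1) * (k + a + 1) * (laguerrePoly a n).coeff (k + 1) =
      (k - n) * (laguerrePoly a n).coeff k := by
  rcases lt_trichotomy k n with hlt | rfl | hgt
  · obtain ⟨j, rfl⟩ := Nat.exists_eq_add_of_lt hlt
    have hchoose := succ_mul_ringChoose_succ (((k + j + 1 : ℕ) : K) + a) j
    rw [coeff_laguerrePoly, coeff_laguerrePoly, if_pos (by lia), if_pos (by lia),
      show k + j + 1 - (k + 1) = j by lia, show k + j + 1 - k = j + 1 by lia, Nat.factorial_succ]
    have hk : (k : K) + 1 ≠ 0 := k.cast_add_one_ne_zero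
    have hfact : (k.factorial : K) ≠ 0 := Nat.cast_ne_zero.2 k.factorial_ne_zero
    push_cast at hchoose ⊢
    field_simp
    linear_combination (-1) ^ k * hchoose
  · simp [coeff_laguerrePoly]
  · simp [coeff_laguerrePoly, hgt.not_ge, (hgt.trans k.lt_succ_self).not_ge]

theorem add_mul_coeff_laguerrePoly (a : K) (n k : ℕ) :
    (k + a) * (laguerrePoly a n).coeff k = (n + a) * (laguerrePoly (a - 1) n).coeff k := by
  simp only [coeff_laguerrePoly]
  split_ifs with hkn
  · have hchoose := sub_mul_ringChoose ((n : K) + a) (n - k)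
    rw [Nat.cast_sub hkn] at hchoose
    rw [← add_sub_assoc]
    linear_combination (-1) ^ k / (k.factorial : K) * hchoose
  · simp

theorem isLaguerreSolution_laguerrePoly (a : K) (n : ℕ) :
    IsLaguerreSolution a n (laguerrePoly a n) := by
  rw [IsLaguerreSolution, sub_mul]
  ext k
  have hcoeff := coeff_laguerrePoly_succ a n k
  cases k with
  | zero =>
    simp only [coeff_add, coeff_sub, mul_coeff_zero, coeff_C_zero, coeff_X_zero, coeff_derivative,
      coeff_zero]
    push_cast at hcoeff ⊢
    linear_combination hcoeff
  | succ k =>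
    simp only [coeff_add, coeff_sub, coeff_C_mul, coeff_X_mul, coeff_derivative, coeff_zero]
    push_cast at hcoeff ⊢
    linear_combination hcoeff

theorem X_mul_derivative_laguerrePoly_add (a : K) (n : ℕ) :
    X * derivative (laguerrePoly a n) + C a * laguerrePoly a n =
      C (n + a) * laguerrePoly (a - 1) n := by
  ext k
  rw [coeff_C_mul, ← add_mul_coeff_laguerrePoly, coeff_add, coeff_C_mul]
  cases k with
  | zero => simp
  | succ k =>
    rw [coeff_X_mul, coeff_derivative]
    push_cast
    ring

theorem derivative_laguerrePoly_zero (a : K) : derivative (laguerrePoly a 0) = 0 := by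
  simp [laguerrePoly]

theorem derivative_laguerrePoly_succ (a : K) (n : ℕ) :
    derivative (laguerrePoly a (n + 1)) = -laguerrePoly (a + 1) n := by
  ext k
  have hk : (k : K) + 1 ≠ 0 := k.cast_add_one_ne_zero
  simp only [coeff_neg, coeff_derivative, coeff_laguerrePoly, Nat.add_le_add_iff_right,
    Nat.add_sub_add_right, Nat.factorial_succ]
  split_ifs
  · push_cast
    rw [add_assoc (n : K), add_comm 1 a]
    field_simp
    ring
  · simp

end LaguerrePoly

theorem laguerre_natCast (a : ℝ) (n : ℕ) (x : ℝ) :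
    laguerre a n x = (laguerrePoly a n).eval x := by
  simp [laguerre, laguerrePoly, eval_finsetSum, genBinom_eq_ringChoose]

theorem laguerre_natCast_sub_one (a : ℝ) (n : ℕ) (x : ℝ) :
    laguerre (a + 1) ((n : ℤ) - 1) x = -(derivative (laguerrePoly a n)).eval x := by
  cases n with
  | zero => simp [laguerre, derivative_laguerrePoly_zero]
  | succ n =>
    rw [Nat.cast_succ, add_sub_cancel_right, laguerre_natCast, derivative_laguerrePoly_succ,
      eval_neg, neg_neg]

theorem XLagII_add_eq_eval (m N : ℕ) (α x : ℝ) :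
    XLagII m α (m + N) x = (laguerreConcomitant (-α - 1) (laguerrePoly (-α - 1) m)
      (laguerrePoly (α + 1) N)).eval x := by
  have hshift := congrArg (eval x) (X_mul_derivative_laguerrePoly_add (-α - 1) m)
  rw [XLagII, Nat.cast_add, add_sub_cancel_left, show α + 2 = α + 1 + 1 by ring,
    show -α - 2 = -α - 1 - 1 by ring, laguerre_natCast_sub_one, laguerre_natCast,
    laguerre_natCast, laguerre_natCast, laguerreConcomitant, wronskian]
  simp only [eval_add, eval_sub, eval_mul, eval_X, eval_C] at hshift ⊢
  linear_combination -(laguerrePoly (α + 1) N).eval x * hshift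

theorem stmt15_general (m : ℕ) (α : ℝ) (n : ℕ) (hmn : m ≤ n) (x : ℝ) :
    deriv (XLagII m α n) x - XLagII m α n x =
      (α + n + 1 - 2 * m) * laguerre (-α - 1) (m : ℤ) x * laguerre (α + 1) ((n : ℤ) - m) x := by
  obtain ⟨N, rfl⟩ := Nat.exists_eq_add_of_le hmn
  have hp := isLaguerreSolution_laguerrePoly (-α - 1) m
  have hq : IsLaguerreSolution (-(-α - 1)) N (laguerrePoly (α + 1) N) := by
    simpa [add_comm] using isLaguerreSolution_laguerrePoly (α + 1) N
  have hF := congrArg (eval x) (hp.derivative_laguerreConcomitant_sub hq)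
  rw [funext (XLagII_add_eq_eval m N α), Polynomial.deriv, ← eval_sub, hF, Nat.cast_add (R := ℤ),
    add_sub_cancel_left, laguerre_natCast, laguerre_natCast, eval_mul, eval_C, eval_mul]
  push_cast
  ring

theorem stmt15 (m : ℕ) (α : ℝ) (hα : (m : ℝ) - 1 < α) (n : ℕ) (hmn : m ≤ n) :
    ∀ x : ℝ,
      deriv (XLagII m α n) x - XLagII m α n x =
        (α + n + 1 - 2 * m) * laguerre (-α - 1) (m : ℤ) x * laguerre (α + 1) ((n : ℤ) - m) x :=
  stmt15_general m α n hmn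
end
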